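/- Let p ∈ (2,∞). There exist constants c, C > 0 depending only on p such that for all t ∈ [0,1] and all z ∈ ℂ one has c·t^{p/2}·|z−1|^p ≤ |z−t|^p − (1−t)^{p−1}·(|z|^p − t) ≤ C·t·|z−1|^2·(|z−t| + 1 − t)^{p−2}. -/

import Mathlib

noncomputable section

/-- The graph of `x ↦ x ^ q` lies above its tangent at `x`. -/
lemma rpow_add_tangent_le_rpow {q x y : ℝ} (hq : 1 < q) (hx : 0 ≤ x) (hy : 0 ≤ y) :
    x ^ q + q * x ^ (q - 1) * (y - x) ≤ y ^ q := by
  rcases hx.eq_or_lt with rfl | hx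
  · rw [Real.zero_rpow (by linarith), Real.zero_rpow (by linarith)]
    simpa using Real.rpow_nonneg hy q
  · have bernoulli := one_add_mul_self_le_rpow_one_add
      (show -1 ≤ y / x - 1 by linarith [div_nonneg hy hx.le]) hq.le
    rw [add_sub_cancel, Real.div_rpow hy hx.le, le_div_iff₀ (Real.rpow_pos_of_pos hx q)]
      at bernoulli
    have split : x ^ q = x ^ (q - 1) * x := by
      rw [← Real.rpow_add_one hx.ne', sub_add_cancel]
    calc x ^ q + q * x ^ (q - 1) * (y - x) = (1 + q * (y / x - 1)) * x ^ q := by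
          rw [split]; field_simp
      _ ≤ y ^ q := bernoulli

lemma sq_rpow_half {a : ℝ} (ha : 0 ≤ a) (p : ℝ) : (a ^ 2) ^ (p / 2) = a ^ p := by
  rw [← Real.rpow_natCast, ← Real.rpow_mul ha]
  congr 1
  push_cast
  ring

/-- The tangent inequality for `x ↦ x ^ (p / 2)`, between the squares of `a` and `b`. -/
lemma rpow_add_tangent_sq_le_rpow {p a b : ℝ} (hp : 2 < p) (ha : 0 ≤ a) (hb : 0 ≤ b) :
    a ^ p + p / 2 * a ^ (p - 2) * (b ^ 2 - a ^ 2) ≤ b ^ p := by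
  have h := rpow_add_tangent_le_rpow (show 1 < p / 2 by linarith) (sq_nonneg a) (sq_nonneg b)
  rwa [sq_rpow_half ha, sq_rpow_half hb, show p / 2 - 1 = (p - 2) / 2 by ring,
    sq_rpow_half ha] at h

lemma mul_rpow_sub_rpow_le {r x y : ℝ} (hr : 0 < r) (hx : 0 ≤ x) (hxy : x ≤ y) :
    y * (y ^ r - x ^ r) ≤ (r + 1) * y ^ r * (y - x) := by
  have tangent := rpow_add_tangent_le_rpow (show 1 < r + 1 by linarith) (hx.trans hxy) hx
  rw [add_sub_cancel_right, Real.rpow_add_one' hx (by linarith),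
    Real.rpow_add_one' (hx.trans hxy) (by linarith)] at tangent
  nlinarith [mul_le_mul_of_nonneg_left hxy (Real.rpow_nonneg hx r)]

lemma mul_abs_rpow_sub_rpow_le {r x y d : ℝ} (hr : 0 < r) (hx : 0 ≤ x) (hy : 0 ≤ y)
    (hd : |x - y| ≤ d) : y * |x ^ r - y ^ r| ≤ (r + 1) * (y + d) ^ r * d := by
  obtain ⟨hl, hu⟩ := abs_le.1 hd
  have hd0 : 0 ≤ d := (abs_nonneg _).trans hd
  rcases le_total x y with h | h
  · rw [abs_sub_comm, abs_of_nonneg (sub_nonneg.2 (Real.rpow_le_rpow hx h hr.le))]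
    refine (mul_rpow_sub_rpow_le hr hx h).trans ?_
    have hpow : y ^ r ≤ (y + d) ^ r := Real.rpow_le_rpow hy (by linarith) hr.le
    gcongr
    linarith
  · have hdiff := sub_nonneg.2 (Real.rpow_le_rpow hy h hr.le)
    rw [abs_of_nonneg hdiff]
    refine (mul_le_mul_of_nonneg_right h hdiff).trans ((mul_rpow_sub_rpow_le hr hy h).trans ?_)
    have hpow : x ^ r ≤ (y + d) ^ r := Real.rpow_le_rpow hx (by linarith) hr.le
    have : 0 ≤ x - y := by linarith
    gcongr

/-- For `h` large compared with `m`, the power of `‖m + h‖ ≥ d - a` dominates its first order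
expansion at `m`. -/
lemma half_rpow_le_sub_rpow {p a d : ℝ} (hp : 2 < p) (ha : 0 ≤ a) (hd : 0 ≤ d)
    (had : (4 * p + 2) * a ≤ d) :
    a ^ p + p * a ^ (p - 1) * d + 1 / 2 * d ^ p ≤ (d - a) ^ p := by
  have hle : a ≤ d := by nlinarith
  have tangent := rpow_add_tangent_le_rpow (show 1 < p by linarith) hd (sub_nonneg.2 hle)
  have split : ∀ x : ℝ, 0 ≤ x → x ^ p = x ^ (p - 2) * x * x ∧ x ^ (p - 1) = x ^ (p - 2) * x := by
    intro x hx
    rw [← Real.rpow_add_one' hx (by linarith), ← Real.rpow_add_one' hx (by linarith)]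
    constructor <;> congr 1 <;> ring
  rw [(split d hd).1, (split d hd).2] at tangent
  rw [(split a ha).1, (split a ha).2, (split d hd).1]
  have hpow : a ^ (p - 2) ≤ d ^ (p - 2) := Real.rpow_le_rpow ha hle (by linarith)
  have hd2 := Real.rpow_nonneg hd (p - 2)
  have h1 : a ^ (p - 2) * (a * a) ≤ d ^ (p - 2) * (a * d) := by gcongr
  have h2 : a ^ (p - 2) * (p * a * d) ≤ d ^ (p - 2) * (p * a * d) := by gcongr
  have h3 : d ^ (p - 2) * d * ((4 * p + 2) * a) ≤ d ^ (p - 2) * d * d := by gcongr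
  linarith

section InnerProductSpace

variable {E : Type*} [NormedAddCommGroup E] [InnerProductSpace ℝ E]

/-- Uniform convexity of `‖·‖ ^ p` for `p > 2`, at a point. -/
lemma exists_le_norm_add_rpow {p : ℝ} (hp : 2 < p) :
    ∃ c : ℝ, 0 < c ∧ ∀ m h : E,
      ‖m‖ ^ p + p * ‖m‖ ^ (p - 2) * inner ℝ m h + c * ‖h‖ ^ p ≤ ‖m + h‖ ^ p := by
  set K := 4 * p + 2 with hK
  have hK0 : 0 < K := by linarith
  refine ⟨min (1 / 2) (p / 2 * (K⁻¹) ^ (p - 2)), by positivity, fun m h => ?_⟩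
  have hm := norm_nonneg m
  have hh := norm_nonneg h
  have hhp := Real.rpow_nonneg hh p
  rcases le_total (K * ‖m‖) ‖h‖ with hcase | hcase
  · have hlarge := half_rpow_le_sub_rpow hp hm hh hcase
    have hmono : (‖h‖ - ‖m‖) ^ p ≤ ‖m + h‖ ^ p := by
      refine Real.rpow_le_rpow (by nlinarith) ?_ (by linarith)
      have := norm_sub_le (m + h) m
      rw [add_sub_cancel_left] at this
      linarith
    have hinner : p * ‖m‖ ^ (p - 2) * inner ℝ m h ≤ p * ‖m‖ ^ (p - 1) * ‖h‖ := by
      rw [show p - 1 = p - 2 + 1 by ring, Real.rpow_add_one' hm (by linarith),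
        mul_assoc, mul_assoc, mul_assoc]
      have := real_inner_le_norm m h
      gcongr
    have hc := mul_le_mul_of_nonneg_right
      (min_le_left (1 / 2) (p / 2 * (K⁻¹) ^ (p - 2))) hhp
    linarith
  · have tangent := rpow_add_tangent_sq_le_rpow hp hm (norm_nonneg (m + h))
    rw [norm_add_sq_real] at tangent
    have hpow : (K⁻¹) ^ (p - 2) * ‖h‖ ^ (p - 2) ≤ ‖m‖ ^ (p - 2) := by
      rw [← Real.mul_rpow (by positivity) hh]
      refine Real.rpow_le_rpow (by positivity) ?_ (by linarith)
      rwa [inv_mul_le_iff₀ hK0]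
    have hc := mul_le_mul_of_nonneg_right
      (min_le_right (1 / 2) (p / 2 * (K⁻¹) ^ (p - 2))) hhp
    have split : ‖h‖ ^ p = ‖h‖ ^ (p - 2) * ‖h‖ ^ 2 := by
      rw [← Real.rpow_add_natCast' hh (by push_cast; linarith)]
      congr 1
      push_cast
      ring
    have hquad : p / 2 * (K⁻¹) ^ (p - 2) * ‖h‖ ^ p ≤ p / 2 * ‖m‖ ^ (p - 2) * ‖h‖ ^ 2 := by
      rw [split]
      calc p / 2 * (K⁻¹) ^ (p - 2) * (‖h‖ ^ (p - 2) * ‖h‖ ^ 2)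
          = p / 2 * ((K⁻¹) ^ (p - 2) * ‖h‖ ^ (p - 2)) * ‖h‖ ^ 2 := by ring
        _ ≤ _ := by gcongr
    linarith

/-- Second order upper bound for `‖·‖ ^ p` at a point, for `p > 2`. -/
lemma norm_add_rpow_le {p : ℝ} (hp : 2 < p) (m h : E) :
    ‖m + h‖ ^ p ≤ ‖m‖ ^ p + p * ‖m‖ ^ (p - 2) * inner ℝ m h
      + p ^ 2 * (‖h‖ ^ 2 * (‖m‖ + ‖h‖) ^ (p - 2)) := by
  have hm := norm_nonneg m
  have hh := norm_nonneg h
  have tangent := rpow_add_tangent_sq_le_rpow hp (norm_nonneg (m + h)) hm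
  rw [norm_add_sq_real] at tangent
  have hdist : |‖m + h‖ - ‖m‖| ≤ ‖h‖ := by
    simpa using abs_norm_sub_norm_le (m + h) m
  have hdiff := mul_abs_rpow_sub_rpow_le (show 0 < p - 2 by linarith)
    (norm_nonneg (m + h)) hm hdist
  have hcross : inner ℝ m h * (‖m + h‖ ^ (p - 2) - ‖m‖ ^ (p - 2))
      ≤ (p - 1) * (‖h‖ ^ 2 * (‖m‖ + ‖h‖) ^ (p - 2)) :=
    calc _ ≤ |inner ℝ m h| * |‖m + h‖ ^ (p - 2) - ‖m‖ ^ (p - 2)| := by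
          rw [← abs_mul]; exact le_abs_self _
      _ ≤ ‖m‖ * ‖h‖ * |‖m + h‖ ^ (p - 2) - ‖m‖ ^ (p - 2)| := by
          gcongr; exact abs_real_inner_le_norm m h
      _ = ‖h‖ * (‖m‖ * |‖m + h‖ ^ (p - 2) - ‖m‖ ^ (p - 2)|) := by ring
      _ ≤ ‖h‖ * ((p - 2 + 1) * (‖m‖ + ‖h‖) ^ (p - 2) * ‖h‖) := by gcongr
      _ = _ := by ring
  have hcross' := mul_le_mul_of_nonneg_left hcross (show 0 ≤ p by linarith)
  have hpow : ‖m + h‖ ^ (p - 2) ≤ (‖m‖ + ‖h‖) ^ (p - 2) :=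
    Real.rpow_le_rpow (norm_nonneg _) (norm_add_le m h) (by linarith)
  have hquad : p / 2 * (‖h‖ ^ 2 * ‖m + h‖ ^ (p - 2))
      ≤ p * (‖h‖ ^ 2 * (‖m‖ + ‖h‖) ^ (p - 2)) := by
    gcongr
    linarith
  linarith

end InnerProductSpace

/-- `p ‖s z‖ ^ (p - 2) ⟪s z, t w⟫` in terms of `⟪z, w⟫`. -/
lemma norm_smul_rpow_mul_inner {p s t : ℝ} (hp : 2 < p) (hs : 0 ≤ s) (z w : ℂ) :
    p * ‖s • z‖ ^ (p - 2) * inner ℝ (s • z) (t • w)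
      = s ^ (p - 1) * t * (p * ‖z‖ ^ (p - 2) * inner ℝ z w) := by
  rw [norm_smul, Real.norm_of_nonneg hs, Real.mul_rpow hs (norm_nonneg z), real_inner_smul_left,
    real_inner_smul_right, show p - 1 = p - 2 + 1 by ring, Real.rpow_add_one' hs (by linarith)]
  ring

lemma norm_smul_rpow_of_nonneg {s : ℝ} (hs : 0 ≤ s) (p : ℝ) (z : ℂ) :
    ‖s • z‖ ^ p = s ^ p * ‖z‖ ^ p := by
  rw [norm_smul, Real.norm_of_nonneg hs, Real.mul_rpow hs (norm_nonneg z)]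

lemma half_rpow_mul_rpow_le {p t : ℝ} (hp : 2 < p) (ht : 0 ≤ t) (ht1 : t ≤ 1) :
    (1 / 2) ^ (p - 1) * t ^ (p / 2) ≤ t ^ p + (1 - t) ^ (p - 1) * t := by
  have hs : 0 ≤ 1 - t := by linarith
  have hsplit : t ^ p = t ^ (p - 1) * t := by
    rw [← Real.rpow_add_one' ht (by linarith), sub_add_cancel]
  have hle : t ^ (p / 2) ≤ t := by
    simpa using Real.rpow_le_rpow_of_exponent_ge' ht ht1 zero_le_one (show 1 ≤ p / 2 by linarith)
  have hhalf : (1 / 2 : ℝ) ^ (p - 1) ≤ t ^ (p - 1) + (1 - t) ^ (p - 1) := by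
    rcases le_total (1 / 2) t with h | h
    · have := Real.rpow_le_rpow (by norm_num) h (show 0 ≤ p - 1 by linarith)
      linarith [Real.rpow_nonneg hs (p - 1)]
    · have := Real.rpow_le_rpow (by norm_num) (show 1 / 2 ≤ 1 - t by linarith)
        (show 0 ≤ p - 1 by linarith)
      linarith [Real.rpow_nonneg ht (p - 1)]
  rw [hsplit, ← add_mul]
  exact mul_le_mul hhalf hle (Real.rpow_nonneg ht _)
    (add_nonneg (Real.rpow_nonneg ht _) (Real.rpow_nonneg hs _))

/-- Lemma 3.1, case `p > 2`.
There exist constants `c, C > 0` depending only on `p` such that for all `t ∈ [0,1]`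
and all `z ∈ ℂ`:
`c t^{p/2} |z-1|^p ≤ |z-t|^p - (1-t)^{p-1} (|z|^p - t) ≤ C t |z-1|² (|z-t| + 1 - t)^{p-2}`. -/
theorem stmt_2 (p : ℝ) (hp : 2 < p) :
    ∃ c C : ℝ, 0 < c ∧ 0 < C ∧
      ∀ (t : ℝ), 0 ≤ t → t ≤ 1 → ∀ z : ℂ,
        c * (t ^ (p / 2) * ‖z - 1‖ ^ p)
            ≤ ‖z - (t : ℂ)‖ ^ p - (1 - t) ^ (p - 1) * (‖z‖ ^ p - t)
          ∧ ‖z - (t : ℂ)‖ ^ p - (1 - t) ^ (p - 1) * (‖z‖ ^ p - t)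
            ≤ C * (t * ‖z - 1‖ ^ (2 : ℝ) * (‖z - (t : ℂ)‖ + 1 - t) ^ (p - 2)) := by
  obtain ⟨c, hc, hlower⟩ := exists_le_norm_add_rpow (E := ℂ) hp
  refine ⟨c * (1 / 2) ^ (p - 1), p ^ 2 * 3 ^ (p - 2), by positivity, by positivity,
    fun t ht ht1 z => ?_⟩
  -- `z - t` and `1` are perturbations of `s z` and `z` in the direction `w = z - 1`.
  obtain ⟨s, hst⟩ : ∃ s, s = 1 - t := ⟨_, rfl⟩
  obtain ⟨w, hw⟩ : ∃ w, w = z - 1 := ⟨_, rfl⟩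
  have hs : 0 ≤ s := by linarith
  have hz := norm_nonneg z
  have hwn := norm_nonneg w
  have hzt : s • z + t • w = z - (t : ℂ) := by
    rw [hst, hw, Complex.real_smul, Complex.real_smul]
    push_cast
    ring
  have hone : z + -w = 1 := by rw [hw]; ring
  have hsp : s ^ p = s ^ (p - 1) * s := by
    rw [← Real.rpow_add_one' hs (by linarith), sub_add_cancel]
  have hsp1 : s ^ (p - 1) = s ^ (p - 2) * s := by
    rw [← Real.rpow_add_one' hs (by linarith)]
    congr 1
    ring
  have hweight : 0 ≤ s ^ (p - 1) * t := mul_nonneg (Real.rpow_nonneg hs _) ht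
  rw [← hst, ← hw]
  constructor
  · have h1 := hlower (s • z) (t • w)
    have h2 := mul_le_mul_of_nonneg_left (hlower z (-w)) hweight
    rw [hzt, norm_smul_rpow_mul_inner hp hs, norm_smul_rpow_of_nonneg hs,
      norm_smul_rpow_of_nonneg ht, hsp] at h1
    rw [hone, norm_one, Real.one_rpow, inner_neg_right, norm_neg] at h2
    have h3 := mul_le_mul_of_nonneg_left (half_rpow_mul_rpow_le hp ht ht1)
      (mul_nonneg hc.le (Real.rpow_nonneg hwn p))
    rw [← hst] at h3
    have h4 : s ^ (p - 1) * s * ‖z‖ ^ p = s ^ (p - 1) * ‖z‖ ^ p - s ^ (p - 1) * t * ‖z‖ ^ p := by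
      rw [hst]; ring
    linarith
  · have h1 := norm_add_rpow_le hp (s • z) (t • w)
    have h2 := mul_le_mul_of_nonneg_left (norm_add_rpow_le hp z (-w)) hweight
    rw [hzt, norm_smul_rpow_mul_inner hp hs, norm_smul_rpow_of_nonneg hs, hsp, norm_smul,
      norm_smul, Real.norm_of_nonneg hs, Real.norm_of_nonneg ht] at h1
    rw [hone, norm_one, Real.one_rpow, inner_neg_right, norm_neg] at h2
    set R := ‖z - (t : ℂ)‖ + 1 - t with hR
    have hR0 : 0 ≤ R := by linarith [norm_nonneg (z - (t : ℂ))]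
    have hwR : ‖w‖ ≤ R := by
      have := norm_sub_le (z - (t : ℂ)) (s : ℂ)
      rw [Complex.norm_of_nonneg hs, hst] at this
      rw [hw, hR, show z - 1 = z - (t : ℂ) - ((1 - t : ℝ) : ℂ) by push_cast; ring]
      linarith
    have hzw : ‖z‖ ≤ 1 + ‖w‖ := by
      have := norm_add_le 1 w
      rwa [hw, add_sub_cancel, norm_one, ← hw] at this
    have hbase : s * ‖z‖ + ‖w‖ ≤ 3 * R := by
      nlinarith [norm_nonneg (z - (t : ℂ)), mul_le_mul_of_nonneg_left hzw hs, mul_nonneg ht hwn]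
    have hpow : ∀ x, 0 ≤ x → x ≤ s * ‖z‖ + ‖w‖ → x ^ (p - 2) ≤ 3 ^ (p - 2) * R ^ (p - 2) := by
      intro x hx hxle
      rw [← Real.mul_rpow (by norm_num) hR0]
      exact Real.rpow_le_rpow hx (hxle.trans hbase) (by linarith)
    have h3 := mul_le_mul_of_nonneg_left
      (hpow (s * ‖z‖ + t * ‖w‖) (by positivity) (by nlinarith))
      (show 0 ≤ p ^ 2 * (t * ‖w‖) ^ 2 by positivity)
    have h4 := mul_le_mul_of_nonneg_left
      (hpow (s * (‖z‖ + ‖w‖)) (by positivity) (by nlinarith))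
      (show 0 ≤ p ^ 2 * (t * s * ‖w‖ ^ 2) by positivity)
    rw [Real.mul_rpow hs (by positivity)] at h4
    have h5 : s ^ (p - 1) * s * ‖z‖ ^ p = s ^ (p - 1) * ‖z‖ ^ p - s ^ (p - 1) * t * ‖z‖ ^ p := by
      rw [hst]; ring
    have h6 : s ^ (p - 1) * t * (p ^ 2 * (‖w‖ ^ 2 * (‖z‖ + ‖w‖) ^ (p - 2)))
        = p ^ 2 * (t * s * ‖w‖ ^ 2) * (s ^ (p - 2) * (‖z‖ + ‖w‖) ^ (p - 2)) := by
      rw [hsp1]; ring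
    have h7 : p ^ 2 * (t * ‖w‖) ^ 2 * (3 ^ (p - 2) * R ^ (p - 2))
        + p ^ 2 * (t * s * ‖w‖ ^ 2) * (3 ^ (p - 2) * R ^ (p - 2))
        = p ^ 2 * 3 ^ (p - 2) * (t * ‖w‖ ^ 2 * R ^ (p - 2)) := by
      rw [hst]; ring
    rw [Real.rpow_two]
    linarith
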